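/- For every τ, σ > 0, every α > 0 and every η ≥ 1, there exists a distribution P on (Y,X) ∈ ℝ² with Y|X Gaussian with conditional mean Xβ and positive conditional variance, such that: (i) inf over homoscedastic Gaussian linear-model laws P̃ of KL(P̃‖P) is at most α; (ii) Var_P(X) = τ²; (iii) E_P[Var_P(Y|X)] = σ²; and (iv) writing V_P(γ) = E_P[X²/ν_γ(X)]^{−2} E_P[Var_P(Y|X) X²/ν_γ(X)²] for the weight class ν_γ(x) = γ₁1_{[0,∞)}(x) + γ₂1_{(−∞,0)}(x), the EQML- and GEE-optimal dispersions γ_{EQML}, γ_{GEE} satisfy (V_P(γ_{EQML}) ∧ V_P(γ_{GEE})) / inf_{γ} V_P(γ) ≥ η. -/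

import Mathlib

open MeasureTheory

/-- Density of N(m, v) at y. -/
noncomputable def npdf (m v y : ℝ) : ℝ :=
  (Real.sqrt (2 * Real.pi * v))⁻¹ * Real.exp (-((y - m) ^ 2) / (2 * v))

/-- The piecewise-constant working variance class ν_γ(x) = γ₁1_{x≥0} + γ₂1_{x<0}. -/
noncomputable def nuw (γ : ℝ × ℝ) (x : ℝ) : ℝ := if 0 ≤ x then γ.1 else γ.2

/-- Sandwich (asymptotic) variance of the weighted least squares estimator with
working variance ν_γ, under X-density p and conditional variance s. -/
noncomputable def Vsand (p s : ℝ → ℝ) (γ : ℝ × ℝ) : ℝ :=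
  ((∫ x, x ^ 2 / nuw γ x * p x)⁻¹) ^ 2 * ∫ x, s x * x ^ 2 / (nuw γ x) ^ 2 * p x

/-- Population EQML (Gaussian quasi-likelihood) dispersion objective. -/
noncomputable def Leqml (p s : ℝ → ℝ) (γ : ℝ × ℝ) : ℝ :=
  ∫ x, (Real.log (nuw γ x) + s x / nuw γ x) * p x

/-- Population GEE dispersion objective. -/
noncomputable def Lgee (p s : ℝ → ℝ) (γ : ℝ × ℝ) : ℝ :=
  ∫ x, (nuw γ x - s x) ^ 2 * p x


open Set in
lemma npdf_eq (v : ℝ) (hv : 0 < v) (y : ℝ) :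
    npdf 0 v y = ProbabilityTheory.gaussianPDFReal 0 v.toNNReal y := by
  simp [npdf, ProbabilityTheory.gaussianPDFReal, Real.coe_toNNReal v hv.le]

lemma npdf_pos (v : ℝ) (hv : 0 < v) (y : ℝ) : 0 < npdf 0 v y := by
  unfold npdf; positivity

lemma npdf_le (v : ℝ) (hv : 0 < v) (y : ℝ) : npdf 0 v y ≤ (Real.sqrt (2 * Real.pi * v))⁻¹ := by
  unfold npdf
  have : Real.exp (-((y - 0) ^ 2) / (2 * v)) ≤ 1 := by
    apply Real.exp_le_one_iff.2
    apply div_nonpos_of_nonpos_of_nonneg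
    · have := sq_nonneg (y - 0); linarith
    · positivity
  have h2 : 0 ≤ (Real.sqrt (2 * Real.pi * v))⁻¹ := by positivity
  nlinarith

lemma npdf_neg (v : ℝ) (y : ℝ) : npdf 0 v (-y) = npdf 0 v y := by
  simp [npdf]

lemma npdf_meas (v : ℝ) : Measurable (npdf 0 v) := by
  unfold npdf; fun_prop

lemma npdf_int (v : ℝ) (hv : 0 < v) : Integrable (npdf 0 v) := by
  have := ProbabilityTheory.integrable_gaussianPDFReal 0 v.toNNReal
  exact this.congr (Filter.Eventually.of_forall fun y => (npdf_eq v hv y).symm)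

lemma npdf_integral (v : ℝ) (hv : 0 < v) : ∫ y, npdf 0 v y = 1 := by
  simp_rw [npdf_eq v hv]
  apply ProbabilityTheory.integral_gaussianPDFReal_eq_one
  exact (Real.toNNReal_pos.2 hv).ne'

lemma npdf_int2 (v : ℝ) (hv : 0 < v) : Integrable (fun y => y ^ 2 * npdf 0 v y) := by
  have := (integrable_rpow_mul_exp_neg_mul_sq (b := 1 / (2 * v)) (by positivity)
    (s := 2) (by norm_num)).const_mul (Real.sqrt (2 * Real.pi * v))⁻¹
  refine this.congr (Filter.Eventually.of_forall fun y => ?_)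
  simp only [npdf, Real.rpow_two]
  rw [show -(y - 0) ^ 2 / (2 * v) = -(1 / (2 * v)) * y ^ 2 by field_simp; ring]
  ring

lemma npdf_integral2 (v : ℝ) (hv : 0 < v) : ∫ y, y ^ 2 * npdf 0 v y = v := by
  have h0 : (v.toNNReal : NNReal) ≠ 0 := (Real.toNNReal_pos.2 hv).ne'
  have h := ProbabilityTheory.variance_id_gaussianReal (μ := 0) (v := v.toNNReal)
  rw [ProbabilityTheory.variance_eq_integral aemeasurable_id] at h
  simp only [id, ProbabilityTheory.integral_id_gaussianReal, sub_zero] at h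
  rw [ProbabilityTheory.integral_gaussianReal_eq_integral_smul h0] at h
  simp_rw [npdf_eq v hv]
  simp only [smul_eq_mul] at h
  rw [Real.coe_toNNReal v hv.le] at h
  refine Eq.trans ?_ h
  exact integral_congr_ae (Filter.Eventually.of_forall fun y => mul_comm _ _)

open Set in
lemma even_half (f : ℝ → ℝ) (hf : Integrable f) (he : ∀ x, f (-x) = f x) :
    ∫ x in Ici 0, f x = (∫ x, f x) / 2 ∧ ∫ x in Iio 0, f x = (∫ x, f x) / 2 := by
  have h1 := integral_comp_neg_Ioi (0:ℝ) f
  simp only [he, neg_zero] at h1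
  have h2 := integral_add_compl (measurableSet_Ici (a := (0:ℝ))) hf
  rw [compl_Ici] at h2
  rw [integral_Iic_eq_integral_Iio, ← integral_Ici_eq_integral_Ioi] at h1
  constructor <;> linarith

lemma odd_zero (f : ℝ → ℝ) (he : ∀ x, f (-x) = - f x) : ∫ x, f x = 0 := by
  have h1 := integral_neg_eq_self f volume
  simp only [he, integral_neg] at h1
  linarith

open Set in
lemma split_int (f g h : ℝ → ℝ) (hg : IntegrableOn g (Ici 0)) (hh : IntegrableOn h (Iio 0))
    (h1 : ∀ x, 0 ≤ x → f x = g x) (h2 : ∀ x, x < 0 → f x = h x) :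
    ∫ x, f x = (∫ x in Ici 0, g x) + ∫ x in Iio 0, h x := by
  have e1 : ∫ x in Ici 0, g x = ∫ x in Ici 0, f x :=
    setIntegral_congr_fun measurableSet_Ici fun x hx => (h1 x hx).symm
  have e2 : ∫ x in Iio 0, h x = ∫ x in Iio 0, f x :=
    setIntegral_congr_fun measurableSet_Iio fun x hx => (h2 x hx).symm
  have i1 : IntegrableOn f (Ici 0) := hg.congr_fun (fun x hx => (h1 x hx).symm) measurableSet_Ici
  have i2 : IntegrableOn f (Iio 0) := hh.congr_fun (fun x hx => (h2 x hx).symm) measurableSet_Iio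
  have i : Integrable f := by
    have hu : (Ici 0 ∪ Iio 0 : Set ℝ) = univ := by
      ext x; simp
    rw [← integrableOn_univ, ← hu]
    exact i1.union i2
  rw [e1, e2, ← integral_add_compl (measurableSet_Ici (a := (0:ℝ))) i, compl_Ici]

/-- abstract form of part (iv) -/
lemma part_iv (p s : ℝ → ℝ) (c a b1 b2 η C : ℝ) (hc : 0 < c) (ha : 0 < a)
    (hb1 : 0 < b1) (hb2 : 0 < b2) (hb : 4 * η * b2 ≤ b1)
    (hE : ∀ γ : ℝ × ℝ, 0 < γ.1 → 0 < γ.2 →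
      Leqml p s γ = (Real.log γ.1 + c / γ.1) / 2 + (Real.log γ.2 + c / γ.2) / 2)
    (hG : ∀ γ : ℝ × ℝ, 0 < γ.1 → 0 < γ.2 →
      Lgee p s γ = (γ.1 - c) ^ 2 / 2 + (γ.2 - c) ^ 2 / 2 + C)
    (hV : ∀ γ : ℝ × ℝ, 0 < γ.1 → 0 < γ.2 →
      Vsand p s γ = ((a / γ.1 + a / γ.2)⁻¹) ^ 2 * (b1 / γ.1 ^ 2 + b2 / γ.2 ^ 2))
    (γE γG : ℝ × ℝ)
    (h1 : 0 < γE.1 ∧ 0 < γE.2 ∧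
          ∀ γ : ℝ × ℝ, 0 < γ.1 → 0 < γ.2 → Leqml p s γE ≤ Leqml p s γ)
    (h2 : 0 < γG.1 ∧ 0 < γG.2 ∧
          ∀ γ : ℝ × ℝ, 0 < γ.1 → 0 < γ.2 → Lgee p s γG ≤ Lgee p s γ) :
    min (Vsand p s γE) (Vsand p s γG) /
            (⨅ γ : {γ : ℝ × ℝ // 0 < γ.1 ∧ 0 < γ.2}, Vsand p s γ.1) ≥ η := by
  have key : ∀ t : ℝ, 0 < t → Real.log c + 1 ≤ Real.log t + c / t ∧
      (t ≠ c → Real.log c + 1 < Real.log t + c / t) := by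
    intro t ht
    have e : Real.log (c / t) = Real.log c - Real.log t := Real.log_div hc.ne' ht.ne'
    constructor
    · have := Real.log_le_sub_one_of_pos (show 0 < c / t by positivity)
      linarith
    · intro hne
      have := Real.log_lt_sub_one_of_pos (show 0 < c / t by positivity)
        (by intro h; rw [div_eq_one_iff_eq ht.ne'] at h; exact hne h.symm)
      linarith
  obtain ⟨hE1, hE2, hEm⟩ := h1
  obtain ⟨hG1, hG2, hGm⟩ := h2
  have eE : γE = (c, c) := by
    have h := hEm (c, c) hc hc
    rw [hE _ hE1 hE2, hE (c, c) hc hc] at h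
    simp only [div_self hc.ne'] at h
    have k1 := key _ hE1
    have k2 := key _ hE2
    ext
    · by_contra hne
      have := k1.2 hne
      linarith [k2.1]
    · by_contra hne
      have := k2.2 hne
      linarith [k1.1]
  have eG : γG = (c, c) := by
    have h := hGm (c, c) hc hc
    rw [hG _ hG1 hG2, hG (c, c) hc hc] at h
    simp only [sub_self] at h
    have q1 := sq_nonneg (γG.1 - c)
    have q2 := sq_nonneg (γG.2 - c)
    ext
    · have : (γG.1 - c) ^ 2 = 0 := by linarith
      have := pow_eq_zero_iff (two_ne_zero) |>.1 this
      simp only; linarith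
    · have : (γG.2 - c) ^ 2 = 0 := by linarith
      have := pow_eq_zero_iff (two_ne_zero) |>.1 this
      simp only; linarith
  rw [eE, eG, min_self]
  have hVc : Vsand p s (c, c) = (b1 + b2) / (4 * a ^ 2) := by
    rw [hV (c, c) hc hc]; simp only; field_simp; ring
  have hVb : Vsand p s (b1 / 1, b2) = b1 * b2 / (a ^ 2 * (b1 + b2)) := by
    rw [hV (b1 / 1, b2) (by simpa using hb1) hb2]; simp only [div_one]; field_simp; ring
  have hlow : ∀ γ : {γ : ℝ × ℝ // 0 < γ.1 ∧ 0 < γ.2},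
      b1 * b2 / (a ^ 2 * (b1 + b2)) ≤ Vsand p s γ.1 := by
    rintro ⟨⟨x, y⟩, hx, hy⟩
    simp only at hx hy
    rw [hV (x, y) hx hy]
    simp only
    rw [show ((a / x + a / y)⁻¹) ^ 2 * (b1 / x ^ 2 + b2 / y ^ 2)
      = (b1 * y ^ 2 + b2 * x ^ 2) / (a ^ 2 * (x + y) ^ 2) by field_simp; ring]
    rw [div_le_div_iff₀ (by positivity) (by positivity)]
    have : b1 * b2 * (x + y) ^ 2 ≤ (b1 * y ^ 2 + b2 * x ^ 2) * (b1 + b2) := by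
      nlinarith [sq_nonneg (b1 * y - b2 * x)]
    nlinarith [mul_le_mul_of_nonneg_left this (sq_nonneg a)]
  have hbot : 0 < b1 * b2 / (a ^ 2 * (b1 + b2)) := by positivity
  have : Nonempty {γ : ℝ × ℝ // 0 < γ.1 ∧ 0 < γ.2} := ⟨⟨(1, 1), by norm_num⟩⟩
  have hge := le_ciInf hlow
  have hle : (⨅ γ : {γ : ℝ × ℝ // 0 < γ.1 ∧ 0 < γ.2}, Vsand p s γ.1) ≤
      b1 * b2 / (a ^ 2 * (b1 + b2)) := by
    rw [← hVb]
    exact ciInf_le ⟨_, by rintro _ ⟨γ, rfl⟩; exact hlow γ⟩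
      (⟨(b1 / 1, b2), by simpa using hb1, hb2⟩ : {γ : ℝ × ℝ // 0 < γ.1 ∧ 0 < γ.2})
  rw [le_antisymm hle hge, hVc, ge_iff_le, le_div_iff₀ hbot]
  rw [mul_div_assoc', div_le_div_iff₀ (by positivity) (by positivity)]
  have : 4 * η * b1 * b2 ≤ (b1 + b2) ^ 2 := by nlinarith
  nlinarith [mul_le_mul_of_nonneg_left this (sq_nonneg a)]

/-- abstract form of the KL bound -/
lemma part_kl (p s : ℝ → ℝ) (v σ0 R α : ℝ) (hv : 0 < v) (hσ0 : σ0 ^ 2 = v)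
    (hp : ∀ x, 0 < p x) (hpi : Integrable p)
    (hsm : Measurable s) (hs : ∀ x, v ≤ s x) (hsR : ∀ x, s x ≤ R)
    (hl : ∫ x, Real.log (s x / v) * p x ≤ 2 * α) :
    (∫ z : ℝ × ℝ,
          (p z.1 * npdf (z.1 * 0) (σ0 ^ 2) z.2) *
            Real.log ((p z.1 * npdf (z.1 * 0) (σ0 ^ 2) z.2) /
              (p z.1 * npdf (z.1 * 0) (s z.1) z.2))) ≤ α := by
  have hs0 : ∀ x, 0 < s x := fun x => hv.trans_le (hs x)
  have e : ∀ z : ℝ × ℝ, (p z.1 * npdf (z.1 * 0) (σ0 ^ 2) z.2) *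
            Real.log ((p z.1 * npdf (z.1 * 0) (σ0 ^ 2) z.2) /
              (p z.1 * npdf (z.1 * 0) (s z.1) z.2)) =
      (Real.log (s z.1 / v) * p z.1 / 2) * npdf 0 v z.2 +
      ((1 / s z.1 - 1 / v) / 2 * p z.1) * (z.2 ^ 2 * npdf 0 v z.2) := by
    rintro ⟨x, y⟩
    simp only [mul_zero, hσ0]
    have hx := hs0 x
    rw [mul_div_mul_left _ _ (hp x).ne', Real.log_div (npdf_pos v hv y).ne' (npdf_pos _ hx y).ne']
    have L : ∀ w : ℝ, 0 < w → Real.log (npdf 0 w y) =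
        - (Real.log (2 * Real.pi) + Real.log w) / 2 - y ^ 2 / (2 * w) := by
      intro w hw
      unfold npdf
      rw [Real.log_mul (by positivity) (by positivity), Real.log_exp, Real.log_inv,
        Real.log_sqrt (by positivity), Real.log_mul (by positivity) hw.ne']
      simp only [sub_zero]
      ring
    rw [L v hv, L _ hx, Real.log_div hx.ne' hv.ne']
    field_simp
    ring
  simp_rw [e]
  have i1 : Integrable (fun x => Real.log (s x / v) * p x / 2) := by
    apply Integrable.div_const
    apply hpi.bdd_mul (c := Real.log (R / v)) (Real.measurable_log.comp (hsm.div_const v)).aestronglyMeasurable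
    refine Filter.Eventually.of_forall fun x => ?_
    have h1 : 1 ≤ s x / v := by rw [le_div_iff₀ hv]; linarith [hs x]
    change ‖Real.log (s x / v)‖ ≤ _
    rw [Real.norm_of_nonneg (Real.log_nonneg h1)]
    apply Real.log_le_log (by linarith)
    have := hsR x
    gcongr
  have b2 : ∀ x, 0 < 1 / s x ∧ 1 / s x ≤ 1 / v := fun x =>
    ⟨by have := hs0 x; positivity, one_div_le_one_div_of_le hv (hs x)⟩
  have i2 : Integrable (fun x => (1 / s x - 1 / v) / 2 * p x) := by
    apply hpi.bdd_mul (c := 1 / v) ((((measurable_const.div hsm).sub_const _).div_const _).aestronglyMeasurable)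
    refine Filter.Eventually.of_forall fun x => ?_
    change ‖(1 / s x - 1 / v) / 2‖ ≤ _
    rw [Real.norm_eq_abs, abs_le]
    have := b2 x
    constructor <;> linarith
  have j1 := i1.mul_prod (npdf_int v hv)
  have j2 := i2.mul_prod (npdf_int2 v hv)
  rw [Measure.volume_eq_prod, integral_add j1 j2, integral_prod_mul (fun x => Real.log (s x / v) * p x / 2)
    (npdf 0 v), integral_prod_mul (fun x => (1 / s x - 1 / v) / 2 * p x) (fun y => y ^ 2 * npdf 0 v y),
    npdf_integral v hv, npdf_integral2 v hv, integral_div]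
  have : ∫ x, (1 / s x - 1 / v) / 2 * p x ≤ 0 := by
    apply integral_nonpos
    intro x
    have := b2 x
    exact mul_nonpos_of_nonpos_of_nonneg (by linarith) (hp x).le
  nlinarith

open Set in
lemma half_int (S A : Set ℝ) (hA : MeasurableSet A) (hAS : A ⊆ S)
    (f : ℝ → ℝ) (hf : Integrable f) (u w : ℝ) :
    IntegrableOn (fun x => (u + A.indicator (fun _ => w) x) * f x) S ∧
    ∫ x in S, (u + A.indicator (fun _ => w) x) * f x = u * (∫ x in S, f x) + w * ∫ x in A, f x := by
  have e : ∀ x, (u + A.indicator (fun _ => w) x) * f x = u * f x + A.indicator (fun x => w * f x) x := by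
    intro x
    by_cases hx : x ∈ A <;> simp [hx] <;> ring
  simp_rw [e]
  have i1 : Integrable (fun x => u * f x) := hf.const_mul u
  have i2 : Integrable (A.indicator (fun x => w * f x)) := (hf.const_mul w).indicator hA
  refine ⟨(i1.add i2).integrableOn, ?_⟩
  rw [integral_add i1.integrableOn i2.integrableOn, integral_const_mul, setIntegral_indicator hA,
    inter_eq_self_of_subset_right hAS, integral_const_mul]

open Set in
lemma half_all (p : ℝ → ℝ) (S A : Set ℝ) (hA : MeasurableSet A) (hAS : A ⊆ S)
    (hp : Integrable p) (v M c g : ℝ) (hg : 0 < g) (hS : ∫ x in S, p x = 1 / 2)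
    (hc : v * (1 / 2) + M * (∫ x in A, p x) = c / 2) :
    (IntegrableOn (fun x => (Real.log g + (v + A.indicator (fun _ => M) x) / g) * p x) S ∧
      ∫ x in S, (Real.log g + (v + A.indicator (fun _ => M) x) / g) * p x
        = (Real.log g + c / g) / 2) ∧
    (IntegrableOn (fun x => (g - (v + A.indicator (fun _ => M) x)) ^ 2 * p x) S ∧
      ∫ x in S, (g - (v + A.indicator (fun _ => M) x)) ^ 2 * p x
        = (g - c) ^ 2 / 2 +
          (v ^ 2 / 2 + ((v + M) ^ 2 - v ^ 2) * (∫ x in A, p x) - c ^ 2 / 2)) := by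
  have e1 : ∀ x, (Real.log g + (v + A.indicator (fun _ => M) x) / g) * p x =
      ((Real.log g + v / g) + A.indicator (fun _ => M / g) x) * p x := by
    intro x
    by_cases hx : x ∈ A
    · simp only [hx, indicator_of_mem]; ring
    · simp only [hx, not_false_eq_true, indicator_of_notMem]; ring
  have e2 : ∀ x, (g - (v + A.indicator (fun _ => M) x)) ^ 2 * p x =
      ((g - v) ^ 2 + A.indicator (fun _ => (g - (v + M)) ^ 2 - (g - v) ^ 2) x) * p x := by
    intro x
    by_cases hx : x ∈ A <;> simp [hx]
  simp_rw [e1, e2]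
  have h1 := half_int S A hA hAS p hp (Real.log g + v / g) (M / g)
  have h2 := half_int S A hA hAS p hp ((g - v) ^ 2) ((g - (v + M)) ^ 2 - (g - v) ^ 2)
  refine ⟨⟨h1.1, ?_⟩, ⟨h2.1, ?_⟩⟩
  · rw [h1.2, hS, show c = 2 * (v * (1 / 2) + M * (∫ x in A, p x)) by rw [hc]; ring]
    field_simp
    ring
  · rw [h2.2, hS]
    have hc' : c = 2 * (v * (1 / 2) + M * (∫ x in A, p x)) := by rw [hc]; ring
    rw [hc']
    ring

lemma log_bound (d c : ℝ) (α : ℝ) (hd : 0 < d) (hc : 0 < c) (hα : 0 < α) (h : d ≤ 2 * α ^ 2) :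
    Real.log ((c / 2 + c / (4 * d)) / (c / 2)) * d ≤ α := by
  have e : (c / 2 + c / (4 * d)) / (c / 2) = 1 + 1 / (2 * d) := by field_simp; ring
  rw [e]
  -- log (1 + x) ≤ √x
  have hx : 0 < 1 / (2 * d) := by positivity
  set x := 1 / (2 * d) with hxd
  set r := Real.sqrt x with hr
  have hr0 : 0 < r := Real.sqrt_pos.2 hx
  have hrr : r ^ 2 = x := Real.sq_sqrt hx.le
  have h1 : Real.log (1 + x) ≤ r := by
    have h2 : 1 + x ≤ Real.exp r := by
      have h5 := Real.sum_le_exp_of_nonneg hr0.le 4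
      simp only [Finset.sum_range_succ, Finset.sum_range_zero, Nat.factorial] at h5
      norm_num at h5
      rw [← hrr]
      refine le_trans ?_ h5
      nlinarith [mul_nonneg hr0.le (sq_nonneg (r - 3 / 2))]
    calc Real.log (1 + x) ≤ Real.log (Real.exp r) := Real.log_le_log (by linarith) h2
      _ = r := Real.log_exp r
  have h3 : (r * d) ^ 2 ≤ α ^ 2 := by
    rw [mul_pow, hrr, hxd]
    have : 1 / (2 * d) * d ^ 2 = d / 2 := by field_simp
    rw [this]; linarith
  have h4 : r * d ≤ α := by
    exact le_of_sq_le_sq h3 hα.le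
  nlinarith

set_option maxHeartbeats 1000000 in
/-- Proposition 1: EQML/GEE dispersion selection can be arbitrarily suboptimal,
for laws arbitrarily close to the homoscedastic Gaussian linear model. -/
theorem stmt19 (τ σ α η : ℝ) (hτ : 0 < τ) (hσ : 0 < σ) (hα : 0 < α) (hη : 1 ≤ η) :
    ∃ (p : ℝ → ℝ) (β : ℝ) (s : ℝ → ℝ),
      Measurable p ∧ (∀ x, 0 < p x) ∧ (∫ x, p x) = 1 ∧
      Measurable s ∧ (∀ x, 0 < s x) ∧
      -- (ii) Var_P(X) = τ²
      (∫ x, x ^ 2 * p x) - (∫ x, x * p x) ^ 2 = τ ^ 2 ∧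
      -- (iii) E_P[Var_P(Y|X)] = σ²
      (∫ x, s x * p x) = σ ^ 2 ∧
      -- (i) a homoscedastic law P̃ (same X-marginal, conditional variance σ₀²)
      -- with KL(P̃‖P) ≤ α
      (∃ σ0 : ℝ, 0 < σ0 ∧
        (∫ z : ℝ × ℝ,
          (p z.1 * npdf (z.1 * β) (σ0 ^ 2) z.2) *
            Real.log ((p z.1 * npdf (z.1 * β) (σ0 ^ 2) z.2) /
              (p z.1 * npdf (z.1 * β) (s z.1) z.2))) ≤ α) ∧
      -- (iv) suboptimality ratio at least η for EQML- and GEE-optimal dispersions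
      (∀ γE γG : ℝ × ℝ,
        (0 < γE.1 ∧ 0 < γE.2 ∧
          ∀ γ : ℝ × ℝ, 0 < γ.1 → 0 < γ.2 → Leqml p s γE ≤ Leqml p s γ) →
        (0 < γG.1 ∧ 0 < γG.2 ∧
          ∀ γ : ℝ × ℝ, 0 < γ.1 → 0 < γ.2 → Lgee p s γG ≤ Lgee p s γ) →
        min (Vsand p s γE) (Vsand p s γG) /
            (⨅ γ : {γ : ℝ × ℝ // 0 < γ.1 ∧ 0 < γ.2}, Vsand p s γ.1) ≥ η) := by
  classical
  set p : ℝ → ℝ := npdf 0 (τ ^ 2) with hpdef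
  have hτ2 : 0 < τ ^ 2 := by positivity
  have hσ2 : 0 < σ ^ 2 := by positivity
  have pm : Measurable p := npdf_meas _
  have pp : ∀ x, 0 < p x := npdf_pos _ hτ2
  have pi1 : Integrable p := npdf_int _ hτ2
  have pi2 : Integrable (fun x => x ^ 2 * p x) := npdf_int2 _ hτ2
  have pI : ∫ x, p x = 1 := npdf_integral _ hτ2
  have pI2 : ∫ x, x ^ 2 * p x = τ ^ 2 := npdf_integral2 _ hτ2
  have pe : ∀ x, p (-x) = p x := npdf_neg _
  have pI1 : ∫ x, x * p x = 0 := odd_zero _ fun x => by rw [pe]; ring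
  obtain ⟨H1, H2⟩ := even_half p pi1 pe
  obtain ⟨Q1, Q2⟩ := even_half _ pi2 fun x => by rw [pe]; ring
  rw [pI] at H1 H2
  rw [pI2] at Q1 Q2
  set P : ℝ := (Real.sqrt (2 * Real.pi * τ ^ 2))⁻¹ with hP
  have hP0 : 0 < P := by positivity
  have pP : ∀ x, p x ≤ P := npdf_le _ hτ2
  set h : ℝ := min 1 (2 * α ^ 2 / P) with hh
  have h0 : 0 < h := by rw [hh]; positivity
  have h1 : h ≤ 1 := min_le_left _ _
  have h2 : h * P ≤ 2 * α ^ 2 := by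
    rw [← le_div_iff₀ hP0]; exact min_le_right _ _
  set K : ℝ := Real.sqrt (4 * η * (τ ^ 2 + 1)) with hK
  have K0 : 0 ≤ K := Real.sqrt_nonneg _
  have K2 : K ^ 2 = 4 * η * (τ ^ 2 + 1) := Real.sq_sqrt (by positivity)
  -- mass of short intervals
  have mass : ∀ a : ℝ, 0 < ∫ x in Set.Ico a (a + h), p x ∧ ∫ x in Set.Ico a (a + h), p x ≤ 2 * α ^ 2 := by
    intro a
    constructor
    · rw [setIntegral_pos_iff_support_of_nonneg_ae
        (Filter.Eventually.of_forall fun x => (pp x).le) pi1.integrableOn]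
      have : Function.support p = Set.univ := by
        ext x; simp [(pp x).ne']
      rw [this, Set.univ_inter, Real.volume_Ico]
      simpa using h0
    · refine le_trans ?_ h2
      have := setIntegral_mono_on (μ := volume) (s := Set.Ico a (a + h)) (f := p) (g := fun _ => P)
        pi1.integrableOn (by simp) measurableSet_Ico (fun x _ => pP x)
      refine this.trans ?_
      simp [h0.le]
  set A : Set ℝ := Set.Ico K (K + h) with hA
  set B : Set ℝ := Set.Ico (-h) (-h + h) with hB
  have mA : MeasurableSet A := measurableSet_Ico
  have mB : MeasurableSet B := measurableSet_Ico
  have sA : A ⊆ Set.Ici 0 := fun x hx => K0.trans hx.1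
  have sB : B ⊆ Set.Iio 0 := fun x hx => by
    have := hx.2
    simpa using this
  obtain ⟨dA0, dA1⟩ := mass K
  obtain ⟨dB0, dB1⟩ := mass (-h)
  rw [← hA] at dA0 dA1
  rw [← hB] at dB0 dB1
  set dA : ℝ := ∫ x in A, p x with hdA
  set dB : ℝ := ∫ x in B, p x with hdB
  set c : ℝ := σ ^ 2 with hc
  set MA : ℝ := c / (4 * dA) with hMA
  set MB : ℝ := c / (4 * dB) with hMB
  have MA0 : 0 < MA := by positivity
  have MB0 : 0 < MB := by positivity
  have MdA : MA * dA = c / 4 := by rw [hMA]; field_simp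
  have MdB : MB * dB = c / 4 := by rw [hMB]; field_simp
  set s : ℝ → ℝ := fun x => c / 2 + A.indicator (fun _ => MA) x + B.indicator (fun _ => MB) x with hs
  have sm : Measurable s := by
    apply Measurable.add
    · exact measurable_const.add (measurable_const.indicator mA)
    · exact measurable_const.indicator mB
  have ia : ∀ x, 0 ≤ A.indicator (fun _ => MA) x ∧ A.indicator (fun _ => MA) x ≤ MA := by
    intro x; by_cases hx : x ∈ A <;> simp [hx, MA0.le]
  have ib : ∀ x, 0 ≤ B.indicator (fun _ => MB) x ∧ B.indicator (fun _ => MB) x ≤ MB := by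
    intro x; by_cases hx : x ∈ B <;> simp [hx, MB0.le]
  have s_lo : ∀ x, c / 2 ≤ s x := fun x => by
    have := ia x; have := ib x; simp only [hs]; linarith
  have s_hi : ∀ x, s x ≤ c / 2 + MA + MB := fun x => by
    have := ia x; have := ib x; simp only [hs]; linarith
  have s_r : ∀ x, 0 ≤ x → s x = c / 2 + A.indicator (fun _ => MA) x := by
    intro x hx
    have : x ∉ B := fun hb => absurd (sB hb) (not_lt.2 hx)
    simp [hs, this]
  have s_l : ∀ x, x < 0 → s x = c / 2 + B.indicator (fun _ => MB) x := by
    intro x hx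
    have : x ∉ A := fun hb => absurd (sA hb) (not_le.2 hx)
    simp [hs, this]
  have n_r : ∀ (γ : ℝ × ℝ) x, 0 ≤ x → nuw γ x = γ.1 := fun γ x hx => by simp [nuw, hx]
  have n_l : ∀ (γ : ℝ × ℝ) x, x < 0 → nuw γ x = γ.2 := fun γ x hx => by simp [nuw, hx]
  refine ⟨p, 0, s, pm, pp, pI, sm, fun x => by have := s_lo x; linarith, ?_, ?_, ?_, ?_⟩
  · rw [pI1, pI2]; ring
  · have a1 := half_int _ A mA sA p pi1 (c / 2) MA
    have a2 := half_int _ B mB sB p pi1 (c / 2) MB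
    rw [split_int _ _ _ a1.1 a2.1 (fun x hx => by rw [s_r x hx]) (fun x hx => by rw [s_l x hx]),
      a1.2, a2.2, H1, H2, MdA, MdB]
    ring
  · refine ⟨Real.sqrt (c / 2), Real.sqrt_pos.2 (by positivity), ?_⟩
    refine part_kl p s (c / 2) _ (c / 2 + MA + MB) α (by positivity)
      (Real.sq_sqrt (by positivity)) pp pi1 sm s_lo s_hi ?_
    have a1 := half_int _ A mA sA p pi1 0 (Real.log ((c / 2 + MA) / (c / 2)))
    have a2 := half_int _ B mB sB p pi1 0 (Real.log ((c / 2 + MB) / (c / 2)))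
    have hc2 : c / 2 ≠ 0 := by positivity
    rw [split_int _ _ _ a1.1 a2.1
      (fun x hx => by
        rw [s_r x hx]
        by_cases hxA : x ∈ A <;> simp [hxA, div_self hc2])
      (fun x hx => by
        rw [s_l x hx]
        by_cases hxA : x ∈ B <;> simp [hxA, div_self hc2]), a1.2, a2.2]
    have l1 := log_bound dA c α dA0 hσ2 hα dA1
    have l2 := log_bound dB c α dB0 hσ2 hα dB1
    linarith
  · set qA : ℝ := ∫ x in A, x ^ 2 * p x with hqA
    set qB : ℝ := ∫ x in B, x ^ 2 * p x with hqB
    have qA1 : K ^ 2 * dA ≤ qA := by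
      rw [hdA, ← integral_const_mul]
      refine setIntegral_mono_on (pi1.const_mul _).integrableOn pi2.integrableOn mA ?_
      intro x hx
      have : K ≤ x := hx.1
      have := (pp x).le
      gcongr
    have qB0 : 0 ≤ qB := setIntegral_nonneg mB fun x _ => by have := (pp x).le; positivity
    have qB1 : qB ≤ dB := by
      refine setIntegral_mono_on pi2.integrableOn pi1.integrableOn mB ?_
      intro x hx
      have hx1 : -h ≤ x := hx.1
      have hx2 : x < 0 := sB hx
      have : x ^ 2 ≤ 1 := by nlinarith
      nlinarith [pp x]
    have B1 := half_int _ A mA sA _ pi2 (c / 2) MA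
    have B2 := half_int _ B mB sB _ pi2 (c / 2) MB
    rw [Q1] at B1
    rw [Q2] at B2
    have b1low : c / 4 * K ^ 2 ≤ MA * qA := by
      rw [← MdA]; nlinarith
    have b2up : MB * qB ≤ c / 4 := by
      rw [← MdB]; nlinarith
    have b2nn : 0 ≤ MB * qB := by positivity
    have ctau : 0 < c * τ ^ 2 := by positivity
    refine part_iv p s c (τ ^ 2 / 2) (c / 2 * (τ ^ 2 / 2) + MA * qA) (c / 2 * (τ ^ 2 / 2) + MB * qB) η
      (((c / 2) ^ 2 / 2 + ((c / 2 + MA) ^ 2 - (c / 2) ^ 2) * dA - c ^ 2 / 2) +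
       ((c / 2) ^ 2 / 2 + ((c / 2 + MB) ^ 2 - (c / 2) ^ 2) * dB - c ^ 2 / 2))
      hσ2 (by positivity) ?_ (by positivity) ?_ ?_ ?_ ?_
    · have : 0 ≤ c / 4 * K ^ 2 := by positivity
      linarith
    · rw [K2] at b1low
      have t1 := mul_le_mul_of_nonneg_left b2up (show 0 ≤ 4 * η by linarith)
      linarith
    · intro γ g1 g2
      have a1 := (half_all p _ A mA sA pi1 (c / 2) MA c γ.1 g1 H1 (by rw [← hdA, MdA]; ring)).1
      have a2 := (half_all p _ B mB sB pi1 (c / 2) MB c γ.2 g2 H2 (by rw [← hdB, MdB]; ring)).1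
      unfold Leqml
      rw [split_int _ _ _ a1.1 a2.1 (fun x hx => by rw [s_r x hx, n_r γ x hx])
        (fun x hx => by rw [s_l x hx, n_l γ x hx]), a1.2, a2.2]
    · intro γ g1 g2
      have a1 := (half_all p _ A mA sA pi1 (c / 2) MA c γ.1 g1 H1 (by rw [← hdA, MdA]; ring)).2
      have a2 := (half_all p _ B mB sB pi1 (c / 2) MB c γ.2 g2 H2 (by rw [← hdB, MdB]; ring)).2
      unfold Lgee
      rw [split_int _ _ _ a1.1 a2.1 (fun x hx => by rw [s_r x hx, n_r γ x hx])
        (fun x hx => by rw [s_l x hx, n_l γ x hx]), a1.2, a2.2]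
      ring
    · intro γ g1 g2
      unfold Vsand
      rw [split_int (fun x => x ^ 2 / nuw γ x * p x) (fun x => x ^ 2 * p x / γ.1)
        (fun x => x ^ 2 * p x / γ.2) (pi2.div_const _).integrableOn (pi2.div_const _).integrableOn
        (fun x hx => by simp only [n_r γ x hx]; ring) (fun x hx => by simp only [n_l γ x hx]; ring),
        integral_div, integral_div, Q1, Q2,
        split_int (fun x => s x * x ^ 2 / (nuw γ x) ^ 2 * p x)
        (fun x => (c / 2 + A.indicator (fun _ => MA) x) * (x ^ 2 * p x) / γ.1 ^ 2)
        (fun x => (c / 2 + B.indicator (fun _ => MB) x) * (x ^ 2 * p x) / γ.2 ^ 2)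
        (Integrable.div_const B1.1 _) (Integrable.div_const B2.1 _)
        (fun x hx => by simp only [n_r γ x hx, s_r x hx]; ring)
        (fun x hx => by simp only [n_l γ x hx, s_l x hx]; ring),
        integral_div, integral_div, B1.2, B2.2]
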